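/- (Achievability part of Theorem 2.) For all integers N ≥ 2, K ≥ 2, and P with 1 ≤ P ≤ K−1, and for any prime power q, there exist a positive integer L and random variables on a finite probability space — messages W_1,…,W_K that are i.i.d. uniform on F_q^L, a user-randomness F, a common randomness S, and for every size-P subset 𝒫 of {1,…,K} and every n ∈ {1,…,N} a query Q_n^{[𝒫]} and an answer A_n^{[𝒫]} — satisfying the independence, query-determinism, answer-determinism, reliability, user-privacy, and database-privacy constraints of the MM-SPIR model, such that H(S) = P·L/(N−1) and, for every size-P subset 𝒫, Σ_{n=1}^{N} H(A_n^{[𝒫]}) = N·P·L/(N−1); i.e., the sum retrieval rate P·L / Σ_{n=1}^{N} H(A_n^{[𝒫]}) equals 1 − 1/N. -/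

import Mathlib

open Finset

namespace MMSPIR

variable {Ω : Type} [Fintype Ω]

/-- Probability that the random variable `X` takes the value `v`,
under the weight function `p` on the finite sample space `Ω`. -/
noncomputable def prob (p : Ω → ℝ) {V : Type} [DecidableEq V] (X : Ω → V) (v : V) : ℝ :=
  ∑ ω ∈ Finset.univ.filter (fun ω => X ω = v), p ω

/-- Shannon entropy of `X`, with logarithm taken to base `q`. -/
noncomputable def ent (q : ℕ) (p : Ω → ℝ) {V : Type} [Fintype V] [DecidableEq V]
    (X : Ω → V) : ℝ :=
  -∑ v : V, prob p X v * Real.logb q (prob p X v)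

/-- Conditional entropy `H(X | Y)`, base `q`. -/
noncomputable def cent (q : ℕ) (p : Ω → ℝ) {V W : Type} [Fintype V] [DecidableEq V]
    [Fintype W] [DecidableEq W] (X : Ω → V) (Y : Ω → W) : ℝ :=
  ent q p (fun ω => (X ω, Y ω)) - ent q p Y

/-- Mutual information `I(X ; Y)`, base `q`. -/
noncomputable def mi (q : ℕ) (p : Ω → ℝ) {V W : Type} [Fintype V] [DecidableEq V]
    [Fintype W] [DecidableEq W] (X : Ω → V) (Y : Ω → W) : ℝ :=
  ent q p X + ent q p Y - ent q p (fun ω => (X ω, Y ω))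

/-- Conditional mutual information `I(X ; Y | Z)`, base `q`. -/
noncomputable def cmi (q : ℕ) (p : Ω → ℝ) {U V W : Type} [Fintype U] [DecidableEq U]
    [Fintype V] [DecidableEq V] [Fintype W] [DecidableEq W]
    (X : Ω → U) (Y : Ω → V) (Z : Ω → W) : ℝ :=
  cent q p X Z + cent q p Y Z - cent q p (fun ω => (X ω, Y ω)) Z

/-- `X` and `Y` have the same distribution. -/
def IdentDist (p : Ω → ℝ) {V : Type} [DecidableEq V] (X Y : Ω → V) : Prop :=
  ∀ v, prob p X v = prob p Y v

/-- A (candidate) MM-SPIR scheme: a finite sample space together with message,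
user-randomness, common-randomness, query and answer random variables, where the
`K` messages take values in `Fin L → Fin q` (strings of `L` symbols from a
`q`-element field). -/
structure Scheme (N K L q : ℕ) where
  Ω : Type
  [fintΩ : Fintype Ω]
  QT : Type
  [fintQT : Fintype QT]
  [decQT : DecidableEq QT]
  AT : Type
  [fintAT : Fintype AT]
  [decAT : DecidableEq AT]
  FT : Type
  [fintFT : Fintype FT]
  [decFT : DecidableEq FT]
  ST : Type
  [fintST : Fintype ST]
  [decST : DecidableEq ST]
  p : Ω → ℝ
  W : Fin K → Ω → (Fin L → Fin q)
  F : Ω → FT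
  S : Ω → ST
  Q : Finset (Fin K) → Fin N → Ω → QT
  A : Finset (Fin K) → Fin N → Ω → AT

attribute [instance] Scheme.fintΩ Scheme.fintQT Scheme.decQT Scheme.fintAT Scheme.decAT
  Scheme.fintFT Scheme.decFT Scheme.fintST Scheme.decST

/-!
Every server answers with a linear image of the messages, masked by the common randomness `S`.
The user sends `F + D n` to server `n`, where `F` is a uniformly random matrix and `D n` a fixed
matrix depending on the wanted set. Each single query is uniform whatever `D n` is, so no server
learns the wanted set. With `D 0 = 0`, server `0` returns the mask `F w + S`; subtracting it from
the answer of server `n` leaves `D n w`, and the rows of the `D n` are chosen to be the unit vectors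
of the symbols of the wanted messages. All answers together are thus a function of `F`, `F w + S`
and the wanted messages. Since `S` is uniform, these are independent of the other messages.
-/

section Probability

variable {p : Ω → ℝ} {U V W : Type} [DecidableEq U] [DecidableEq V] [DecidableEq W]

lemma sum_prob [Fintype V] (p : Ω → ℝ) (X : Ω → V) : ∑ v, prob p X v = ∑ ω, p ω :=
  Finset.sum_fiberwise _ X p

lemma prob_comp [Fintype V] (p : Ω → ℝ) (X : Ω → V) (f : V → U) (u : U) :
    prob p (fun ω => f (X ω)) u = ∑ v with f v = u, prob p X v := by
  unfold prob
  rw [Finset.sum_fiberwise_eq_sum_filter]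
  simp only [Finset.mem_filter_univ]

lemma prob_comp_of_injective (p : Ω → ℝ) (X : Ω → V) {f : V → U} (hf : Function.Injective f)
    (v : V) : prob p (fun ω => f (X ω)) (f v) = prob p X v := by
  simp only [prob, hf.eq_iff]

lemma prob_prodMk (p : Ω → ℝ) (X : Ω → U) (Y : Ω → V) (u : U) (v : V) :
    prob p (fun ω => (X ω, Y ω)) (u, v) = prob (fun ω => if X ω = u then p ω else 0) Y v := by
  simp only [prob, Prod.mk.injEq, ← Finset.sum_filter, Finset.filter_filter, and_comm]

lemma sum_prob_prodMk [Fintype V] (p : Ω → ℝ) (X : Ω → U) (Y : Ω → V) (u : U) :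
    ∑ v, prob p (fun ω => (X ω, Y ω)) (u, v) = prob p X u := by
  simp only [prob_prodMk, sum_prob]
  rw [prob, Finset.sum_filter]

lemma prob_prodMk_comp [Fintype V] (p : Ω → ℝ) (X : Ω → U) (Y : Ω → V) (g : V → W) (u : U) (w : W) :
    prob p (fun ω => (X ω, g (Y ω))) (u, w) =
      ∑ v with g v = w, prob p (fun ω => (X ω, Y ω)) (u, v) := by
  simp only [prob_prodMk, prob_comp _ Y g]

lemma IdentDist.comp [Finite V] {X Y : Ω → V} (h : IdentDist p X Y) (f : V → U) :
    IdentDist p (fun ω => f (X ω)) (fun ω => f (Y ω)) := fun u => by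
  have := Fintype.ofFinite V
  simp only [prob_comp p _ f, h _]

/-- Independence of two random variables, stated on point masses. -/
def Indep (p : Ω → ℝ) (X : Ω → U) (Y : Ω → V) : Prop :=
  ∀ u v, prob p (fun ω => (X ω, Y ω)) (u, v) = prob p X u * prob p Y v

lemma Indep.comp_right [Finite V] {X : Ω → U} {Y : Ω → V} (h : Indep p X Y) (g : V → W) :
    Indep p X (fun ω => g (Y ω)) := fun u w => by
  have := Fintype.ofFinite V
  rw [prob_prodMk_comp, prob_comp p Y g, Finset.mul_sum]
  exact Finset.sum_congr rfl fun v _ => h u v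

/-- `X` is uniformly distributed on its whole codomain. -/
def Unif (p : Ω → ℝ) [Fintype V] (X : Ω → V) : Prop :=
  ∀ v, prob p X v = (Fintype.card V : ℝ)⁻¹

/-- The weight function of the uniform distribution on `Ω`. -/
noncomputable def uniformWeight (Ω : Type) [Fintype Ω] : Ω → ℝ :=
  fun _ => (Fintype.card Ω : ℝ)⁻¹

lemma sum_uniformWeight [Nonempty Ω] : ∑ ω, uniformWeight Ω ω = 1 := by
  simp [uniformWeight]

lemma unif_id [DecidableEq Ω] : Unif (uniformWeight Ω) fun ω => ω := fun ω => by
  simp [prob, uniformWeight, Finset.filter_eq']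

variable [Fintype U] [Fintype V]

lemma Unif.comp_equiv {X : Ω → V} (h : Unif p X) (e : V ≃ U) : Unif p fun ω => e (X ω) := by
  intro u
  obtain ⟨v, rfl⟩ := e.surjective u
  rw [prob_comp_of_injective p X e.injective, h, Fintype.card_congr e]

lemma Unif.fst [Nonempty V] {X : Ω → U} {Y : Ω → V} (h : Unif p fun ω => (X ω, Y ω)) :
    Unif p X := fun u => by
  rw [← sum_prob_prodMk p X Y u]
  simp [h _]

lemma Unif.snd [Nonempty U] {X : Ω → U} {Y : Ω → V} (h : Unif p fun ω => (X ω, Y ω)) :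
    Unif p Y :=
  (h.comp_equiv (Equiv.prodComm U V)).fst

lemma Unif.indep {X : Ω → U} {Y : Ω → V} (h : Unif p fun ω => (X ω, Y ω)) : Indep p X Y := by
  intro u v
  have : Nonempty U := ⟨u⟩
  have : Nonempty V := ⟨v⟩
  rw [h, h.fst, h.snd, Fintype.card_prod, Nat.cast_mul, mul_inv]

lemma Unif.identDist {X Y : Ω → V} (hX : Unif p X) (hY : Unif p Y) : IdentDist p X Y :=
  fun v => (hX v).trans (hY v).symm

end Probability

section Entropy

variable {p : Ω → ℝ} {U V W : Type} [Fintype U] [DecidableEq U] [Fintype V] [DecidableEq V]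
  [Fintype W] [DecidableEq W]

lemma ent_eq_sum_negMulLog (q : ℕ) (p : Ω → ℝ) (X : Ω → V) :
    ent q p X = (∑ v, Real.negMulLog (prob p X v)) / Real.log q := by
  simp only [ent, Real.logb, Real.negMulLog, Finset.sum_div, ← Finset.sum_neg_distrib]
  exact Finset.sum_congr rfl fun v _ => by ring

lemma ent_comp_of_injective (q : ℕ) (p : Ω → ℝ) (X : Ω → V) {f : V → U}
    (hf : Function.Injective f) : ent q p (fun ω => f (X ω)) = ent q p X := by
  rw [ent_eq_sum_negMulLog, ent_eq_sum_negMulLog]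
  congr 1
  refine (Fintype.sum_of_injective f hf _ _ (fun u hu => ?_) fun v => ?_).symm
  · have : prob p (fun ω => f (X ω)) u = 0 :=
      Finset.sum_eq_zero fun ω hω => absurd ⟨X ω, (Finset.mem_filter.1 hω).2⟩ hu
    rw [this, Real.negMulLog_zero]
  · rw [prob_comp_of_injective p X hf]

lemma cent_eq_zero_of_eq_comp (q : ℕ) (p : Ω → ℝ) {X : Ω → U} {Y : Ω → V} (g : V → U)
    (h : ∀ ω, X ω = g (Y ω)) : cent q p X Y = 0 := by
  obtain rfl : X = fun ω => g (Y ω) := funext h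
  exact sub_eq_zero.2 <| ent_comp_of_injective q p Y (f := fun v => (g v, v))
    fun _ _ h => congrArg Prod.snd h

lemma Unif.ent_eq [Nonempty V] (q : ℕ) {X : Ω → V} (h : Unif p X) :
    ent q p X = Real.logb q (Fintype.card V) := by
  simp [ent, h _, Real.logb_inv]

lemma Indep.ent_prodMk (q : ℕ) (hp : ∑ ω, p ω = 1) {X : Ω → U} {Y : Ω → V} (h : Indep p X Y) :
    ent q p (fun ω => (X ω, Y ω)) = ent q p X + ent q p Y := by
  simp only [ent_eq_sum_negMulLog, ← add_div]
  congr 1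
  simp only [Fintype.sum_prod_type, h _ _, Real.negMulLog_mul, Finset.sum_add_distrib,
    ← Finset.mul_sum, ← Finset.sum_mul, sum_prob, hp, one_mul]

lemma Indep.mi_eq_zero (q : ℕ) (hp : ∑ ω, p ω = 1) {X : Ω → U} {Y : Ω → V} (h : Indep p X Y) :
    mi q p X Y = 0 :=
  sub_eq_zero.2 (h.ent_prodMk q hp).symm

end Entropy

variable {N K L P q : ℕ}

/-- The constraints of the MM-SPIR model, for a scheme retrieving any `P` of the `K` messages. -/
structure Scheme.IsMMSPIR (M : Scheme N K L q) (P : ℕ) : Prop where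
  weight_nonneg : ∀ ω, 0 ≤ M.p ω
  weight_sum_eq_one : ∑ ω, M.p ω = 1
  messages_uniform : ∀ v : Fin K → Fin L → Fin q,
    prob M.p (fun ω (k : Fin K) => M.W k ω) v = 1 / (q : ℝ) ^ (K * L)
  independence : ent q M.p (fun ω => (M.F ω, M.S ω, fun k : Fin K => M.W k ω)) =
    ent q M.p M.F + ent q M.p M.S + ent q M.p (fun ω (k : Fin K) => M.W k ω)
  query_determinism : ∀ T : Finset (Fin K), T.card = P →
    cent q M.p (fun ω (n : Fin N) => M.Q T n ω) M.F = 0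
  answer_determinism : ∀ T : Finset (Fin K), T.card = P → ∀ n : Fin N,
    cent q M.p (M.A T n) (fun ω => (M.Q T n ω, (fun k : Fin K => M.W k ω), M.S ω)) = 0
  reliability : ∀ T : Finset (Fin K), T.card = P →
    cent q M.p (fun ω (k : {x : Fin K // x ∈ T}) => M.W k.1 ω)
      (fun ω => ((fun n : Fin N => M.A T n ω), M.F ω)) = 0
  user_privacy : ∀ (n : Fin N) (T₁ T₂ : Finset (Fin K)), T₁.card = P → T₂.card = P →
    IdentDist M.p
      (fun ω => (M.Q T₁ n ω, M.A T₁ n ω, (fun k : Fin K => M.W k ω), M.S ω))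
      (fun ω => (M.Q T₂ n ω, M.A T₂ n ω, (fun k : Fin K => M.W k ω), M.S ω))
  database_privacy : ∀ T : Finset (Fin K), T.card = P →
    mi q M.p (fun ω (k : {x : Fin K // x ∈ Tᶜ}) => M.W k.1 ω)
      (fun ω => ((fun n : Fin N => M.Q T n ω), (fun n : Fin N => M.A T n ω), M.F ω)) = 0

lemma logb_card_vector (hq : 2 ≤ q) : Real.logb q (Fintype.card (Fin P → Fin q)) = P := by
  have : (1 : ℝ) < q := by exact_mod_cast hq
  simp [Real.logb_pow, Real.logb_self_eq_one this]

section LinearScheme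

open scoped Fin.CommRing Matrix

/-- A query: a matrix with one row for each message wanted and one column for each symbol of each
message stored. -/
abbrev Query (P K L q : ℕ) : Type := Matrix (Fin P) (Fin K × Fin L) (Fin q)

variable [NeZero q]

/-- The answer of a server holding the messages `w` and the common randomness `s` to the
query `Q`. Symbols are elements of `ℤ / q`. -/
def answer (Q : Query P K L q) (w : Fin K → Fin L → Fin q) (s : Fin P → Fin q) : Fin P → Fin q :=
  Q *ᵥ Function.uncurry w + s

lemma answer_add (Q D : Query P K L q) (w : Fin K → Fin L → Fin q) (s : Fin P → Fin q) :
    answer (Q + D) w s = answer Q w s + D *ᵥ Function.uncurry w := by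
  rw [answer, answer, Matrix.add_mulVec, add_right_comm]

/-- The sample space of the linear schemes: messages, user randomness, common randomness. -/
abbrev Sample (K L P q : ℕ) : Type :=
  (Fin K → Fin L → Fin q) × Query P K L q × (Fin P → Fin q)

lemma unif_messages_query (D : Query P K L q) :
    Unif (uniformWeight (Sample K L P q)) fun ω => (ω.1, ω.2.1 + D, ω.2.2) :=
  unif_id.comp_equiv <| (Equiv.refl _).prodCongr ((Equiv.addRight D).prodCongr (Equiv.refl _))

lemma unif_messages_answer (D : Query P K L q) :
    Unif (uniformWeight (Sample K L P q)) fun ω =>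
      (ω.1, ω.2.1, answer (ω.2.1 + D) ω.1 ω.2.2) :=
  unif_id.comp_equiv <| (Equiv.refl _).prodShear fun w =>
    (Equiv.refl _).prodShear fun F => Equiv.addLeft ((F + D) *ᵥ Function.uncurry w)

lemma ent_randomness_messages (K L P q : ℕ) [NeZero q] :
    ent q (uniformWeight (Sample K L P q)) (fun ω => (ω.2.1, ω.2.2, ω.1)) =
      ent q (uniformWeight (Sample K L P q)) (fun ω => ω.2.1) +
        ent q (uniformWeight (Sample K L P q)) (fun ω => ω.2.2) +
        ent q (uniformWeight (Sample K L P q)) (fun ω => ω.1) := by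
  have unif_FSW : Unif (uniformWeight (Sample K L P q)) fun ω => (ω.2.1, ω.2.2, ω.1) :=
    unif_id.comp_equiv <| (Equiv.prodComm _ _).trans (Equiv.prodAssoc _ _ _)
  rw [unif_FSW.indep.ent_prodMk q sum_uniformWeight,
    unif_FSW.snd.indep.ent_prodMk q sum_uniformWeight, add_assoc]

lemma prob_messages (v : Fin K → Fin L → Fin q) :
    prob (uniformWeight (Sample K L P q)) (fun ω => ω.1) v = 1 / (q : ℝ) ^ (K * L) := by
  rw [Unif.fst (Y := fun ω : Sample K L P q => ω.2) unif_id v]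
  simp [← pow_mul, mul_comm]

lemma ent_commonRandomness (hq : 2 ≤ q) :
    ent q (uniformWeight (Sample K L P q)) (fun ω => ω.2.2) = P := by
  rw [(unif_messages_query 0).snd.snd.ent_eq q, logb_card_vector hq]

lemma ent_answer (hq : 2 ≤ q) (D : Query P K L q) :
    ent q (uniformWeight (Sample K L P q)) (fun ω => answer (ω.2.1 + D) ω.1 ω.2.2) = P := by
  rw [(unif_messages_answer D).snd.snd.ent_eq q, logb_card_vector hq]

lemma identDist_query_answer (D₁ D₂ : Query P K L q) :
    IdentDist (uniformWeight (Sample K L P q))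
      (fun ω => (ω.2.1 + D₁, answer (ω.2.1 + D₁) ω.1 ω.2.2, ω.1, ω.2.2))
      (fun ω => (ω.2.1 + D₂, answer (ω.2.1 + D₂) ω.1 ω.2.2, ω.1, ω.2.2)) :=
  ((unif_messages_query D₁).identDist (unif_messages_query D₂)).comp
    fun x => (x.2.1, answer x.2.1 x.1 x.2.2, x.1, x.2.2)

variable {T : Finset (Fin K)} {D : Fin N → Query P K L q} {n₀ : Fin N}

lemma cent_wanted_answers_eq_zero (h₀ : D n₀ = 0)
    (hD : ∀ k ∈ T, ∀ l, ∃ n j, D n j = Pi.single (k, l) 1) :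
    cent q (uniformWeight (Sample K L P q)) (fun ω (k : {x // x ∈ T}) => ω.1 k.1)
      (fun ω => ((fun n => answer (ω.2.1 + D n) ω.1 ω.2.2), ω.2.1)) = 0 := by
  choose n j hnj using fun k : {x // x ∈ T} => hD k.1 k.2
  let decode (y : (Fin N → Fin P → Fin q) × Query P K L q) (k : {x // x ∈ T}) (l : Fin L) : Fin q :=
    y.1 (n k l) (j k l) - y.1 n₀ (j k l)
  have decode_answers (ω : Sample K L P q) :
      decode ((fun n => answer (ω.2.1 + D n) ω.1 ω.2.2), ω.2.1) = fun k => ω.1 k.1 := by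
    funext k l
    have row_mulVec : (D (n k l) *ᵥ Function.uncurry ω.1) (j k l) = ω.1 k.1 l := by
      rw [Matrix.mulVec, hnj, single_one_dotProduct, Function.uncurry_apply_pair]
    simp only [decode, answer_add, Pi.add_apply, row_mulVec, h₀, Matrix.zero_mulVec,
      Pi.zero_apply, add_zero, add_sub_cancel_left]
  exact cent_eq_zero_of_eq_comp q _ decode fun ω => (decode_answers ω).symm

lemma mulVec_uncurry_congr {D : Query P K L q} (hD : ∀ j k l, k ∉ T → D j (k, l) = 0)
    {w w' : Fin K → Fin L → Fin q} (hw : ∀ k ∈ T, w k = w' k) :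
    D *ᵥ Function.uncurry w = D *ᵥ Function.uncurry w' := by
  funext j
  simp only [Matrix.mulVec, dotProduct]
  refine Finset.sum_congr rfl fun ⟨k, l⟩ _ => ?_
  by_cases hk : k ∈ T
  · rw [Function.uncurry_apply_pair, Function.uncurry_apply_pair, hw k hk]
  · rw [hD j k l hk, zero_mul, zero_mul]

set_option synthInstance.maxSize 256 in
lemma indep_unwanted_masks (T : Finset (Fin K)) (D : Query P K L q) :
    Indep (uniformWeight (Sample K L P q)) (fun ω (k : {x // x ∈ Tᶜ}) => ω.1 k.1)
      (fun ω => ((fun k : {x // x ∉ Tᶜ} => ω.1 k.1), ω.2.1, answer (ω.2.1 + D) ω.1 ω.2.2)) :=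
  ((unif_messages_answer D).comp_equiv <|
    ((Equiv.piEquivPiSubtypeProd (· ∈ Tᶜ) _).prodCongr (Equiv.refl _)).trans
      (Equiv.prodAssoc _ _ _)).indep

lemma mi_unwanted_observations_eq_zero (h₀ : D n₀ = 0)
    (hD : ∀ n j k l, k ∉ T → D n j (k, l) = 0) :
    mi q (uniformWeight (Sample K L P q)) (fun ω (k : {x // x ∈ Tᶜ}) => ω.1 k.1)
      (fun ω => ((fun n => ω.2.1 + D n), (fun n => answer (ω.2.1 + D n) ω.1 ω.2.2), ω.2.1)) =
        0 := by
  let extend (w : {x // x ∉ Tᶜ} → Fin L → Fin q) (k : Fin K) : Fin L → Fin q :=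
    if hk : k ∉ Tᶜ then w ⟨k, hk⟩ else 0
  let observe (y : ({x // x ∉ Tᶜ} → Fin L → Fin q) × Query P K L q × (Fin P → Fin q)) :
      (Fin N → Query P K L q) × (Fin N → Fin P → Fin q) × Query P K L q :=
    (fun n => y.2.1 + D n, fun n => y.2.2 + D n *ᵥ Function.uncurry (extend y.1), y.2.1)
  have observe_masks (ω : Sample K L P q) :
      observe ((fun k => ω.1 k.1), ω.2.1, answer (ω.2.1 + D n₀) ω.1 ω.2.2) =
        ((fun n => ω.2.1 + D n), (fun n => answer (ω.2.1 + D n) ω.1 ω.2.2), ω.2.1) := by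
    have mulVec_extend (n : Fin N) : D n *ᵥ Function.uncurry (extend fun k => ω.1 k.1) =
        D n *ᵥ Function.uncurry ω.1 :=
      mulVec_uncurry_congr (hD n) fun k hk => dif_pos (by simpa using hk)
    simp only [observe, mulVec_extend, h₀, add_zero, answer_add]
  simp only [← observe_masks]
  exact ((indep_unwanted_masks T (D n₀)).comp_right observe).mi_eq_zero q sum_uniformWeight

/-- The scheme in which the messages, the user randomness and the common randomness are independent
and uniform, and server `n` receives the user randomness shifted by `D T n` when the set `T` of
messages is wanted. -/
noncomputable def linearScheme (D : Finset (Fin K) → Fin N → Query P K L q) :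
    Scheme N K L q where
  Ω := Sample K L P q
  QT := Query P K L q
  AT := Fin P → Fin q
  FT := Query P K L q
  ST := Fin P → Fin q
  p := uniformWeight _
  W k ω := ω.1 k
  F ω := ω.2.1
  S ω := ω.2.2
  Q T n ω := ω.2.1 + D T n
  A T n ω := answer (ω.2.1 + D T n) ω.1 ω.2.2

lemma isMMSPIR_linearScheme {D : Finset (Fin K) → Fin N → Query P K L q} (h₀ : ∀ T, D T n₀ = 0)
    (h_unit : ∀ T, T.card = P → ∀ k ∈ T, ∀ l, ∃ n j, D T n j = Pi.single (k, l) 1)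
    (h_supp : ∀ T n j k l, k ∉ T → D T n j (k, l) = 0) :
    (linearScheme D).IsMMSPIR P where
  weight_nonneg _ := inv_nonneg.2 (Nat.cast_nonneg _)
  weight_sum_eq_one := sum_uniformWeight (Ω := Sample K L P q)
  messages_uniform := prob_messages (P := P)
  independence := ent_randomness_messages K L P q
  query_determinism T _ := cent_eq_zero_of_eq_comp q _ (fun (F : Query P K L q) n => F + D T n)
    fun _ => rfl
  answer_determinism _ _ _ :=
    cent_eq_zero_of_eq_comp q _ (fun y => answer y.1 y.2.1 y.2.2) fun _ => rfl
  reliability T hT := cent_wanted_answers_eq_zero (h₀ T) (h_unit T hT)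
  user_privacy n T₁ T₂ _ _ := identDist_query_answer (D T₁ n) (D T₂ n)
  database_privacy T _ := mi_unwanted_observations_eq_zero (h₀ T) (h_supp T)

/-- The shifts of the retrieval scheme: none for server `0`; for server `l + 1`, row `j` is the unit
vector of the symbol `l` of the `j`-th wanted message. Sets `T` that do not have size `P`, for which
nothing has to be retrieved, get the shift `0`. -/
def unitShift (T : Finset (Fin K)) : Fin (L + 1) → Query P K L q :=
  Fin.cons 0 fun l j kl => if ∃ h : T.card = P, (T.orderEmbOfFin h j, l) = kl then 1 else 0

lemma unitShift_zero (T : Finset (Fin K)) : (unitShift T 0 : Query P K L q) = 0 := rfl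

lemma unitShift_succ {T : Finset (Fin K)} (h : T.card = P) (l : Fin L) (j : Fin P) :
    (unitShift T l.succ : Query P K L q) j = Pi.single (T.orderEmbOfFin h j, l) 1 := by
  funext kl
  change (if ∃ h : T.card = P, (T.orderEmbOfFin h j, l) = kl then (1 : Fin q) else 0) = _
  simp only [h, exists_true_left, Pi.single_apply, eq_comm]

lemma exists_unitShift_eq_single {T : Finset (Fin K)} (h : T.card = P) {k : Fin K} (hk : k ∈ T)
    (l : Fin L) : ∃ n j, (unitShift T n : Query P K L q) j = Pi.single (k, l) 1 := by
  obtain ⟨j, rfl⟩ : k ∈ Set.range (T.orderEmbOfFin h) := by simpa using hk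
  exact ⟨l.succ, j, unitShift_succ h l j⟩

lemma unitShift_apply_eq_zero {T : Finset (Fin K)} (n : Fin (L + 1)) (j : Fin P) {k : Fin K}
    (l : Fin L) (hk : k ∉ T) : (unitShift T n : Query P K L q) j (k, l) = 0 := by
  cases n using Fin.cases with
  | zero => rfl
  | succ m =>
    refine if_neg ?_
    rintro ⟨h, hkl⟩
    exact hk ((Prod.mk.inj hkl).1 ▸ T.orderEmbOfFin_mem h j)

end LinearScheme

theorem mmspir_achievability_general (N K P q : ℕ) (hN : 2 ≤ N) (hq : 2 ≤ q) :
    ∃ L : ℕ, 1 ≤ L ∧ ∃ M : Scheme N K L q, M.IsMMSPIR P ∧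
      ent q M.p M.S = (P : ℝ) * L / ((N : ℝ) - 1) ∧
      ∀ T : Finset (Fin K), T.card = P →
        ∑ n : Fin N, ent q M.p (M.A T n) = (N : ℝ) * P * L / ((N : ℝ) - 1) := by
  have : NeZero q := ⟨by omega⟩
  obtain ⟨L, rfl⟩ : ∃ L, N = L + 1 := ⟨N - 1, by omega⟩
  have cast_L : ((L + 1 : ℕ) : ℝ) - 1 = L := by push_cast; ring
  have L_ne_zero : (L : ℝ) ≠ 0 := Nat.cast_ne_zero.2 (by omega)
  refine ⟨L, by omega, linearScheme (P := P) unitShift, ?_, ?_, fun T _ => ?_⟩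
  · exact isMMSPIR_linearScheme unitShift_zero
      (fun _ h _ hk => exists_unitShift_eq_single h hk)
      fun _ n j _ l => unitShift_apply_eq_zero n j l
  · rw [cast_L, mul_div_cancel_right₀ _ L_ne_zero]
    exact ent_commonRandomness hq
  · have ent_A (n : Fin (L + 1)) : ent q (linearScheme unitShift).p
        ((linearScheme (P := P) unitShift).A T n) = P := ent_answer hq (unitShift T n)
    simp [ent_A, L_ne_zero]

theorem mmspir_achievability
    (N K P q : ℕ) (hN : 2 ≤ N) (hK : 2 ≤ K) (hP1 : 1 ≤ P) (hP2 : P ≤ K - 1)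
    (hq : IsPrimePow q)
    : ∃ L : ℕ, 1 ≤ L ∧ ∃ M : Scheme N K L q,
      (∀ ω, 0 ≤ M.p ω) ∧ ((∑ ω, M.p ω) = 1) ∧
      (∀ v : Fin K → Fin L → Fin q,
        prob M.p (fun ω (k : Fin K) => M.W k ω) v = 1 / (q : ℝ) ^ (K * L)) ∧
      (ent q M.p (fun ω => (M.F ω, M.S ω, fun k : Fin K => M.W k ω)) =
        ent q M.p M.F + ent q M.p M.S + ent q M.p (fun ω (k : Fin K) => M.W k ω)) ∧
      (∀ 𝒫₀ : Finset (Fin K), 𝒫₀.card = P →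
        cent q M.p (fun ω (n : Fin N) => M.Q 𝒫₀ n ω) M.F = 0) ∧
      (∀ 𝒫₀ : Finset (Fin K), 𝒫₀.card = P → ∀ n : Fin N,
        cent q M.p (M.A 𝒫₀ n)
          (fun ω => (M.Q 𝒫₀ n ω, (fun k : Fin K => M.W k ω), M.S ω)) = 0) ∧
      (∀ 𝒫₀ : Finset (Fin K), 𝒫₀.card = P →
        cent q M.p (fun ω (k : {x : Fin K // x ∈ 𝒫₀}) => M.W k.1 ω)
          (fun ω => ((fun n : Fin N => M.A 𝒫₀ n ω), M.F ω)) = 0) ∧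
      (∀ (n : Fin N) (𝒫₁ 𝒫₂ : Finset (Fin K)), 𝒫₁.card = P → 𝒫₂.card = P →
        IdentDist M.p
          (fun ω => (M.Q 𝒫₁ n ω, M.A 𝒫₁ n ω, (fun k : Fin K => M.W k ω), M.S ω))
          (fun ω => (M.Q 𝒫₂ n ω, M.A 𝒫₂ n ω, (fun k : Fin K => M.W k ω), M.S ω))) ∧
      (∀ 𝒫₀ : Finset (Fin K), 𝒫₀.card = P →
        mi q M.p (fun ω (k : {x : Fin K // x ∈ 𝒫₀ᶜ}) => M.W k.1 ω)
          (fun ω => ((fun n : Fin N => M.Q 𝒫₀ n ω), (fun n : Fin N => M.A 𝒫₀ n ω), M.F ω)) = 0) ∧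
      (ent q M.p M.S = (P : ℝ) * L / ((N : ℝ) - 1)) ∧
      (∀ 𝒫₀ : Finset (Fin K), 𝒫₀.card = P →
        (∑ n : Fin N, ent q M.p (M.A 𝒫₀ n)) = (N : ℝ) * P * L / ((N : ℝ) - 1)) := by
  obtain ⟨L, hL, M, hM, hS, hA⟩ := mmspir_achievability_general N K P q hN hq.two_le
  exact ⟨L, hL, M, hM.weight_nonneg, hM.weight_sum_eq_one, hM.messages_uniform, hM.independence,
    hM.query_determinism, hM.answer_determinism, hM.reliability, hM.user_privacy,
    hM.database_privacy, hS, hA⟩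

end MMSPIR
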